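/- Let Ω ⊊ ℝ^m be a nonempty proper open convex set and let δ(x) = dist(x, ℝ^m \ Ω) denote the distance to the boundary. Then for every f ∈ C_c^∞(Ω) the boundary Hardy inequality ∫_Ω f(x)²/δ(x)² dx ≤ 4·∫_Ω |∇f(x)|² dx holds. -/

import Mathlib

open Real MeasureTheory

/-! The distance `δ` to the complement of a convex set is concave, hence superharmonic: testing
`-Δδ ≥ 0` against `f² / δ ≥ 0` gives `0 ≤ ∫ ⟪∇δ, ∇(f² / δ)⟫`. Since `δ` need not be twice
differentiable, this is obtained by letting `t → 0` in the difference quotients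
`(δ (x + t v) - δ x) / t`, which concavity makes nonincreasing in the direction `v`. Expanding the
gradient and completing the square bounds the integrand by `2 |∇f|² - (f / δ)² |∇δ|² / 2`, and
`|∇δ| = 1` almost everywhere because `δ` decreases at unit speed towards a nearest point of the
complement. -/

open Filter Metric Set Topology
open scoped Gradient NNReal RealInnerProductSpace

section Division

theorem lipschitzWith_mul_of_norm_le {X R : Type*} [PseudoMetricSpace X] [NonUnitalSeminormedRing R]
    {f g : X → R} {A B M N : ℝ≥0} (hf : LipschitzWith A f) (hg : LipschitzWith B g)
    (hfM : ∀ x, ‖f x‖ ≤ M) (hgN : ∀ x, ‖g x‖ ≤ N) :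
    LipschitzWith (M * B + A * N) fun x ↦ f x * g x := by
  refine LipschitzWith.of_dist_le_mul fun x y ↦ ?_
  have hfxy := hf.dist_le_mul x y
  have hgxy := hg.dist_le_mul x y
  rw [dist_eq_norm] at hfxy hgxy
  calc dist (f x * g x) (f y * g y)
      = ‖f x * (g x - g y) + (f x - f y) * g y‖ := by rw [dist_eq_norm]; noncomm_ring
    _ ≤ ‖f x‖ * ‖g x - g y‖ + ‖f x - f y‖ * ‖g y‖ :=
        (norm_add_le _ _).trans (add_le_add (norm_mul_le _ _) (norm_mul_le _ _))
    _ ≤ M * (B * dist x y) + A * dist x y * N := by gcongr <;> simp only [hfM, hgN]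
    _ = ↑(M * B + A * N) * dist x y := by push_cast; ring

theorem lipschitzOnWith_inv₀ {𝕜 : Type*} [NormedField 𝕜] {c : ℝ≥0} (hc : 0 < c) :
    LipschitzOnWith (c * c)⁻¹ (fun x : 𝕜 ↦ x⁻¹) {x | c ≤ ‖x‖} := by
  refine LipschitzOnWith.of_dist_le_mul fun x (hx : (c : ℝ) ≤ ‖x‖) y (hy : (c : ℝ) ≤ ‖y‖) ↦ ?_
  have hc' : (0 : ℝ) < c := hc
  rw [dist_inv_inv₀ (norm_pos_iff.1 (hc'.trans_le hx)) (norm_pos_iff.1 (hc'.trans_le hy)),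
    div_eq_inv_mul]
  push_cast
  gcongr

theorem exists_lipschitzWith_div_of_hasCompactSupport {X : Type*} [PseudoMetricSpace X]
    {f g : X → ℝ} {A B : ℝ≥0} (hf : LipschitzWith A f) (hfsupp : HasCompactSupport f)
    (hg : LipschitzWith B g) (hpos : ∀ x ∈ tsupport f, 0 < g x) :
    ∃ D, LipschitzWith D fun x ↦ f x / g x := by
  obtain ⟨c, hc, hcg⟩ : ∃ c, 0 < c ∧ ∀ x ∈ tsupport f, c ≤ g x :=
    hfsupp.isCompact.exists_forall_le' hg.continuous.continuousOn hpos
  lift c to ℝ≥0 using hc.le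
  obtain ⟨M, hM⟩ := hfsupp.exists_bound_of_continuous hf.continuous
  have hmax : ∀ x, (c : ℝ) ≤ ‖max (g x) c‖ := fun x ↦ (le_max_right _ _).trans (le_norm_self _)
  have hinv : LipschitzWith ((c * c)⁻¹ * B) fun x ↦ (max (g x) c)⁻¹ :=
    lipschitzOnWith_univ.1 <| (lipschitzOnWith_inv₀ (NNReal.coe_pos.1 hc)).comp
      (lipschitzOnWith_univ.2 (hg.max_const c)) fun x _ ↦ hmax x
  have hinv_le : ∀ x, ‖(max (g x) c)⁻¹‖ ≤ (c⁻¹ : ℝ≥0) := fun x ↦ by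
    rw [norm_inv, NNReal.coe_inv]
    exact inv_anti₀ hc (hmax x)
  have hdiv : (fun x ↦ f x / g x) = fun x ↦ f x * (max (g x) c)⁻¹ := funext fun x ↦ by
    by_cases hx : x ∈ tsupport f
    · rw [max_eq_left (hcg x hx), div_eq_mul_inv]
    · rw [image_eq_zero_of_notMem_tsupport hx, zero_div, zero_mul]
  rw [hdiv]
  exact ⟨_, lipschitzWith_mul_of_norm_le hf hinv
    (fun x ↦ (hM x).trans (le_coe_toNNReal M)) hinv_le⟩

theorem exists_lipschitzWith_sq_div_of_hasCompactSupport {X : Type*} [PseudoMetricSpace X]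
    {f g : X → ℝ} {A B : ℝ≥0} (hf : LipschitzWith A f) (hsupp : HasCompactSupport f)
    (hg : LipschitzWith B g) (hpos : ∀ x ∈ tsupport f, 0 < g x) :
    ∃ D, LipschitzWith D fun x ↦ f x ^ 2 / g x := by
  obtain ⟨M, hM⟩ := hsupp.exists_bound_of_continuous hf.continuous
  have hM' : ∀ x, ‖f x‖ ≤ M.toNNReal := fun x ↦ (hM x).trans (le_coe_toNNReal M)
  simp_rw [sq]
  exact exists_lipschitzWith_div_of_hasCompactSupport (lipschitzWith_mul_of_norm_le hf hf hM' hM')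
    hsupp.mul_right hg fun x hx ↦ hpos x (tsupport_mul_subset_left hx)

theorem tsupport_sq_div_subset {X : Type*} [TopologicalSpace X] (f g : X → ℝ) :
    tsupport (fun x ↦ f x ^ 2 / g x) ⊆ tsupport f :=
  closure_mono fun x hx (hfx : f x = 0) ↦ hx (by simp [hfx])

end Division

section Concave

theorem concaveOn_infDist_compl {E : Type*} [SeminormedAddCommGroup E] [NormedSpace ℝ E]
    {s : Set E} (hs : Convex ℝ s) : ConcaveOn ℝ s fun x ↦ infDist x sᶜ := by
  refine ⟨hs, fun x hx y hy a b ha hb hab ↦ ?_⟩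
  rcases sᶜ.eq_empty_or_nonempty with hempty | hne
  · simp [hempty]
  refine (le_infDist hne).2 fun z hz ↦ ?_
  by_contra! hlt
  simp only [smul_eq_mul] at hlt
  -- A point `z` of the complement too close to `a • x + b • y` is a convex combination of points
  -- of the balls about `x` and `y` inscribed in `s`.
  set r := a * infDist x sᶜ + b * infDist y sᶜ
  have hr : 0 < r := dist_nonneg.trans_lt hlt
  set u := r⁻¹ • (z - (a • x + b • y))
  have hu : ‖u‖ < 1 := by
    rw [norm_smul, norm_inv, norm_of_nonneg hr.le, inv_mul_lt_one₀ hr, ← dist_eq_norm']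
    exact hlt
  have mem_of_mem : ∀ p ∈ s, p + infDist p sᶜ • u ∈ s := fun p hp ↦ by
    rcases infDist_nonneg.eq_or_lt' (a := infDist p sᶜ) with hzero | hpos
    · simpa [hzero] using hp
    · refine ball_infDist_compl_subset (x := p) (mem_ball'.2 ?_)
      rw [dist_self_add_right, norm_smul, norm_of_nonneg hpos.le]
      exact mul_lt_of_lt_one_right hpos hu
  refine hz ?_
  have hz_eq : z = a • (x + infDist x sᶜ • u) + b • (y + infDist y sᶜ • u) :=
    calc z = (a • x + b • y) + r • u := by rw [smul_inv_smul₀ hr.ne', add_sub_cancel]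
      _ = a • (x + infDist x sᶜ • u) + b • (y + infDist y sᶜ • u) := by
        simp only [r]
        module
  exact hz_eq ▸ hs (mem_of_mem x hx) (mem_of_mem y hy) ha hb hab

theorem concaveOn_add_le_add_swap {E : Type*} [AddCommGroup E] [Module ℝ E] {s : Set E}
    {g : E → ℝ} (hg : ConcaveOn ℝ s g) {x y : E} (hx : x ∈ s) (hy : y ∈ s) {a b : ℝ}
    (ha : 0 ≤ a) (hb : 0 ≤ b) (hab : a + b = 1) :
    g x + g y ≤ g (a • x + b • y) + g (b • x + a • y) := by
  have hxy := hg.2 hx hy ha hb hab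
  have hyx := hg.2 hx hy hb ha ((add_comm b a).trans hab)
  simp only [smul_eq_mul] at hxy hyx
  obtain rfl : b = 1 - a := by linarith
  linarith

theorem lineDeriv_neg_sub_nonneg_of_concaveOn {E : Type*} [NormedAddCommGroup E] [NormedSpace ℝ E]
    {Ω : Set E} {g : E → ℝ} (hΩ : IsOpen Ω) (hg : ConcaveOn ℝ Ω g) {x v : E}
    (hx : x ∈ Ω) (hxv : x + v ∈ Ω) :
    0 ≤ lineDeriv ℝ (fun y ↦ g (y + v) - g y) x (-v) := by
  by_cases hdiff : LineDifferentiableAt ℝ (fun y ↦ g (y + v) - g y) x (-v)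
  swap
  · exact (lineDeriv_zero_of_not_lineDifferentiableAt hdiff).ge
  have hmem : ∀ᶠ t : ℝ in 𝓝[>] 0, x + t • -v ∈ Ω := by
    have : Tendsto (fun t : ℝ ↦ x + t • -v) (𝓝 0) (𝓝 x) :=
      Continuous.tendsto' (by fun_prop) _ _ (by simp)
    exact nhdsWithin_le_nhds (this (hΩ.mem_nhds hx))
  refine ge_of_tendsto hdiff.hasLineDerivAt.tendsto_slope_zero_right ?_
  filter_upwards [hmem, self_mem_nhdsWithin] with t htΩ (ht : 0 < t)
  have hswap := concaveOn_add_le_add_swap hg htΩ hxv (a := (1 + t)⁻¹) (b := t * (1 + t)⁻¹)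
    (by positivity) (by positivity) (by field_simp)
  have hleft : (1 + t)⁻¹ • (x + t • -v) + (t * (1 + t)⁻¹) • (x + v) = x := by
    match_scalars <;> grind
  have hright : (t * (1 + t)⁻¹) • (x + t • -v) + (1 + t)⁻¹ • (x + v) = x + t • -v + v := by
    match_scalars <;> grind
  rw [hleft, hright] at hswap
  refine smul_nonneg (inv_nonneg.2 ht.le) ?_
  linarith

end Concave

section Gradient

variable {E : Type*} [NormedAddCommGroup E] [InnerProductSpace ℝ E]

theorem inner_smul_sub_smul_le (a b : E) (t : ℝ) :
    ⟪b, (2 * t) • a - t ^ 2 • b⟫ ≤ 2 * ‖a‖ ^ 2 - t ^ 2 * ‖b‖ ^ 2 / 2 := by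
  have hsq : 0 ≤ ‖(2 : ℝ) • a - t • b‖ ^ 2 := sq_nonneg _
  rw [norm_sub_sq_real, norm_smul, norm_smul, inner_smul_left, inner_smul_right, mul_pow, mul_pow,
    norm_eq_abs, norm_eq_abs, sq_abs, sq_abs] at hsq
  rw [inner_sub_right, inner_smul_right, inner_smul_right, real_inner_self_eq_norm_sq,
    real_inner_comm]
  simp only [ringHom_apply] at hsq
  linarith

section Complete

variable [CompleteSpace E] {f g : E → ℝ} {f' g' x : E}

theorem norm_gradient (f : E → ℝ) (x : E) : ‖∇ f x‖ = ‖fderiv ℝ f x‖ :=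
  LinearIsometryEquiv.norm_map _ _

theorem norm_gradient_le_of_lipschitz {C : ℝ≥0} (hf : LipschitzWith C f) (x : E) :
    ‖∇ f x‖ ≤ C :=
  (norm_gradient f x).trans_le (norm_fderiv_le_of_lipschitz ℝ hf)

theorem hasCompactSupport_gradient (hf : HasCompactSupport f) : HasCompactSupport (∇ f) :=
  (hf.fderiv ℝ).comp_left (map_zero (InnerProductSpace.toDual ℝ E).symm)

theorem gradient_of_notMem_tsupport (hx : x ∉ tsupport f) : ∇ f x = 0 := by
  rw [gradient, fderiv_of_notMem_tsupport ℝ hx, map_zero]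

theorem hasGradientAt_sq_div (hf : HasGradientAt f f' x) (hg : HasGradientAt g g' x)
    (hgx : g x ≠ 0) :
    HasGradientAt (fun y ↦ f y ^ 2 / g y)
      ((2 * (f x / g x)) • f' - (f x / g x) ^ 2 • g') x := by
  rw [hasGradientAt_iff_hasFDerivAt] at hf hg ⊢
  have hmul := (hf.pow 2).mul ((hasDerivAt_inv hgx).comp_hasFDerivAt x hg)
  simp only [div_eq_mul_inv]
  refine hmul.congr_fderiv ?_
  simp only [map_sub, map_smulₛₗ, conj_trivial, Function.comp_apply]
  match_scalars <;> grind

theorem inner_gradient_sq_div_le (hf : DifferentiableAt ℝ f x) (hg : DifferentiableAt ℝ g x)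
    (hgx : x ∈ tsupport f → g x ≠ 0) :
    ⟪∇ g x, ∇ (fun y ↦ f y ^ 2 / g y) x⟫ ≤
      2 * ‖∇ f x‖ ^ 2 - f x ^ 2 / g x ^ 2 * ‖∇ g x‖ ^ 2 / 2 := by
  by_cases hx : x ∈ tsupport f
  · rw [(hasGradientAt_sq_div hf.hasGradientAt hg.hasGradientAt (hgx hx)).gradient, ← div_pow]
    exact inner_smul_sub_smul_le _ _ _
  · rw [gradient_of_notMem_tsupport (notMem_subset (tsupport_sq_div_subset f g) hx),
      gradient_of_notMem_tsupport hx, image_eq_zero_of_notMem_tsupport hx]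
    simp

end Complete

theorem norm_gradient_infDist [ProperSpace E] {s : Set E} {x : E} (hs : IsClosed s)
    (hne : s.Nonempty) (hx : x ∉ s) (hdiff : DifferentiableAt ℝ (infDist · s) x) :
    ‖∇ (infDist · s) x‖ = 1 := by
  have hle : ‖∇ (infDist · s) x‖ ≤ 1 := by
    simpa only [NNReal.coe_one] using norm_gradient_le_of_lipschitz (lipschitz_infDist_pt s) x
  refine hle.antisymm ?_
  obtain ⟨y, hy, hxy⟩ := hs.exists_infDist_eq_dist hne x
  have hpos : 0 < dist x y := hxy ▸ (hs.notMem_iff_infDist_pos hne).1 hx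
  have hderiv : fderiv ℝ (infDist · s) x (y - x) ≤ -dist x y := by
    refine le_of_tendsto (hdiff.hasFDerivAt.hasLineDerivAt (y - x)).tendsto_slope_zero_right ?_
    filter_upwards [Ioo_mem_nhdsGT one_pos] with t ht
    have hline : infDist (x + t • (y - x)) s ≤ (1 - t) * dist x y := by
      refine (infDist_le_dist_of_mem hy).trans_eq ?_
      rw [← norm_of_nonneg (sub_nonneg.2 ht.2.le), dist_eq_norm, dist_eq_norm, ← norm_smul]
      congr 1
      module
    rw [smul_eq_mul, inv_mul_le_iff₀ ht.1, hxy]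
    linarith
  have hcs : -(‖∇ (infDist · s) x‖ * dist x y) ≤ fderiv ℝ (infDist · s) x (y - x) := by
    rw [← inner_gradient_left, dist_eq_norm']
    exact neg_le_of_abs_le (abs_real_inner_le_norm _ _)
  exact le_of_mul_le_mul_right (by linarith) hpos

end Gradient

section Integral

theorem integrable_of_norm_le_of_hasCompactSupport {X F : Type*} [TopologicalSpace X]
    [MeasurableSpace X] [NormedAddCommGroup F] {μ : Measure X}
    [IsFiniteMeasureOnCompacts μ] {g : X → F} {C : ℝ} (hg : AEStronglyMeasurable g μ)
    (hbound : ∀ x, ‖g x‖ ≤ C) (hsupp : HasCompactSupport g) : Integrable g μ :=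
  (integrableOn_iff_integrable_of_support_subset (subset_tsupport g)).1 <|
    Measure.integrableOn_of_bounded hsupp.isCompact.measure_lt_top.ne hg (ae_of_all _ hbound)

variable {E : Type*} [NormedAddCommGroup E] [InnerProductSpace ℝ E] [FiniteDimensional ℝ E]
  [MeasurableSpace E] [BorelSpace E] {μ : Measure E}
  {f g φ : E → ℝ} {Ω : Set E} {A B : ℝ≥0}

theorem measurable_gradient (f : E → ℝ) : Measurable (∇ f) :=
  (InnerProductSpace.toDual ℝ E).symm.continuous.measurable.comp (measurable_fderiv ℝ f)

theorem integrable_gradient [IsFiniteMeasureOnCompacts μ] (hf : LipschitzWith A f)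
    (hsupp : HasCompactSupport f) : Integrable (∇ f) μ :=
  integrable_of_norm_le_of_hasCompactSupport (measurable_gradient f).aestronglyMeasurable
    (norm_gradient_le_of_lipschitz hf) (hasCompactSupport_gradient hsupp)

theorem integrable_inner_gradient [IsFiniteMeasureOnCompacts μ] (hg : LipschitzWith A g)
    (hf : LipschitzWith B f) (hsupp : HasCompactSupport f) :
    Integrable (fun x ↦ ⟪∇ g x, ∇ f x⟫) μ := by
  refine ((integrable_gradient (μ := μ) hf hsupp).norm.const_mul A).mono'
    ((measurable_gradient g).inner (measurable_gradient f)).aestronglyMeasurable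
    (ae_of_all _ fun x ↦ (norm_inner_le_norm _ _).trans ?_)
  gcongr
  exact norm_gradient_le_of_lipschitz hg x

theorem integrable_mul_norm_gradient_sq {ψ : E → ℝ} (hψ : Integrable ψ μ)
    (hg : LipschitzWith A g) : Integrable (fun x ↦ ψ x * ‖∇ g x‖ ^ 2) μ := by
  refine hψ.mul_bdd (c := A ^ 2) ((measurable_gradient g).norm.pow_const 2).aestronglyMeasurable
    (ae_of_all _ fun x ↦ ?_)
  rw [norm_pow, norm_norm]
  gcongr
  exact norm_gradient_le_of_lipschitz hg x

theorem integrable_sq_div_mul_norm_gradient_sq [IsFiniteMeasureOnCompacts μ]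
    (hf : LipschitzWith B f) (hsupp : HasCompactSupport f) (hg : LipschitzWith A g)
    (hpos : ∀ x ∈ tsupport f, 0 < g x) :
    Integrable (fun x ↦ f x ^ 2 / g x ^ 2 * ‖∇ g x‖ ^ 2) μ := by
  obtain ⟨_, hψ⟩ := exists_lipschitzWith_div_of_hasCompactSupport hf hsupp hg hpos
  have hψint : Integrable (fun x ↦ (f x / g x) ^ 2) μ :=
    (hψ.continuous.pow 2).integrable_of_hasCompactSupport <|
      hsupp.mono fun x hx (hfx : f x = 0) ↦ hx (by simp [hfx])
  simp_rw [← div_pow]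
  exact integrable_mul_norm_gradient_sq hψint hg

variable [μ.IsAddHaarMeasure]

theorem ae_lineDeriv_eq_inner_gradient (hf : LipschitzWith A f) (v : E) :
    ∀ᵐ x ∂μ, lineDeriv ℝ f x v = ⟪∇ f x, v⟫ := by
  filter_upwards [hf.ae_differentiableAt] with x hx
  rw [hx.lineDeriv_eq_fderiv, inner_gradient_left]

theorem integrable_lineDeriv (hf : LipschitzWith A f) (hsupp : HasCompactSupport f) (v : E) :
    Integrable (fun x ↦ lineDeriv ℝ f x v) μ :=
  ((integrable_gradient hf hsupp).inner_const v).congr <|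
    (ae_lineDeriv_eq_inner_gradient hf v).mono fun _ hx ↦ hx.symm

theorem integral_sub_mul_lineDeriv_nonneg (hΩ : IsOpen Ω) (hconc : ConcaveOn ℝ Ω g)
    (hg : LipschitzWith A g) (hφ : LipschitzWith B φ) (hsupp : HasCompactSupport φ)
    (hφ0 : 0 ≤ φ) {v : E} (hΩφ : ∀ x ∈ tsupport φ, x ∈ Ω ∧ x + v ∈ Ω) :
    0 ≤ ∫ x, (g (x + v) - g x) * lineDeriv ℝ φ x v ∂μ := by
  have hdiff : LipschitzWith (A * 1 + A) fun x ↦ g (x + v) - g x :=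
    (hg.comp (isometry_add_right v).lipschitz).sub hg
  have hparts := hdiff.integral_lineDeriv_mul_eq (μ := μ) hφ hsupp (-v)
  simp only [neg_neg] at hparts
  simp_rw [mul_comm (g _ - g _), ← hparts]
  refine integral_nonneg fun x ↦ ?_
  by_cases hx : x ∈ tsupport φ
  · obtain ⟨hxΩ, hxvΩ⟩ := hΩφ x hx
    exact mul_nonneg (lineDeriv_neg_sub_nonneg_of_concaveOn hΩ hconc hxΩ hxvΩ) (hφ0 x)
  · simp [image_eq_zero_of_notMem_tsupport hx]

theorem integral_lineDeriv_mul_lineDeriv_nonneg (hΩ : IsOpen Ω) (hconc : ConcaveOn ℝ Ω g)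
    (hg : LipschitzWith A g) (hφ : LipschitzWith B φ) (hsupp : HasCompactSupport φ)
    (hφ0 : 0 ≤ φ) (hφΩ : tsupport φ ⊆ Ω) (v : E) :
    0 ≤ ∫ x, lineDeriv ℝ g x v * lineDeriv ℝ φ x v ∂μ := by
  refine ge_of_tendsto (hg.integral_inv_smul_sub_mul_tendsto_integral_lineDeriv_mul
    (integrable_lineDeriv hφ hsupp v) v) ?_
  have hmem : ∀ᶠ t : ℝ in 𝓝[>] 0, ∀ x ∈ tsupport φ, x + t • v ∈ Ω := by
    refine nhdsWithin_le_nhds <| hsupp.isCompact.eventually_forall_of_forall_eventually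
      fun x hx ↦ ?_
    have : Continuous fun p : ℝ × E ↦ p.2 + p.1 • v := by fun_prop
    exact this.continuousAt.eventually_mem (hΩ.mem_nhds (by simpa using hφΩ hx))
  filter_upwards [hmem, self_mem_nhdsWithin] with t htΩ (ht : 0 < t)
  have hscale : ∀ x, t⁻¹ • (g (x + t • v) - g x) * lineDeriv ℝ φ x v =
      (t⁻¹ * t⁻¹) * ((g (x + t • v) - g x) * lineDeriv ℝ φ x (t • v)) := fun x ↦ by
    rw [lineDeriv_smul, smul_eq_mul, smul_eq_mul]
    field_simp
  simp_rw [hscale, integral_const_mul]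
  exact mul_nonneg (by positivity) <| integral_sub_mul_lineDeriv_nonneg hΩ hconc hg hφ hsupp hφ0
    fun x hx ↦ ⟨hφΩ hx, htΩ x hx⟩

theorem integral_inner_gradient_nonneg_of_concaveOn (hΩ : IsOpen Ω) (hconc : ConcaveOn ℝ Ω g)
    (hg : LipschitzWith A g) (hφ : LipschitzWith B φ) (hsupp : HasCompactSupport φ)
    (hφ0 : 0 ≤ φ) (hφΩ : tsupport φ ⊆ Ω) :
    0 ≤ ∫ x, ⟪∇ g x, ∇ φ x⟫ ∂μ := by
  let b := stdOrthonormalBasis ℝ E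
  have hcoord : (fun x ↦ ⟪∇ g x, ∇ φ x⟫) =ᵐ[μ]
      fun x ↦ ∑ i, lineDeriv ℝ g x (b i) * lineDeriv ℝ φ x (b i) := by
    filter_upwards [hg.ae_differentiableAt, hφ.ae_differentiableAt] with x hgx hφx
    rw [← b.sum_inner_mul_inner]
    refine Finset.sum_congr rfl fun i _ ↦ ?_
    rw [real_inner_comm (∇ φ x), inner_gradient_left, inner_gradient_left,
      hgx.lineDeriv_eq_fderiv, hφx.lineDeriv_eq_fderiv]
  have hint : ∀ i, Integrable (fun x ↦ lineDeriv ℝ g x (b i) * lineDeriv ℝ φ x (b i)) μ :=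
    fun i ↦ (integrable_lineDeriv hφ hsupp (b i)).bdd_mul
      (aestronglyMeasurable_lineDeriv hg.continuous μ)
      (ae_of_all _ fun _ ↦ norm_lineDeriv_le_of_lipschitz ℝ hg)
  rw [integral_congr_ae hcoord, integral_finsetSum _ fun i _ ↦ hint i]
  exact Finset.sum_nonneg fun i _ ↦
    integral_lineDeriv_mul_lineDeriv_nonneg hΩ hconc hg hφ hsupp hφ0 hφΩ (b i)

theorem integral_sq_div_mul_norm_gradient_sq_le (hΩ : IsOpen Ω) (hconc : ConcaveOn ℝ Ω g)
    (hg : LipschitzWith A g) (hpos : ∀ x ∈ Ω, 0 < g x) (hf : LipschitzWith B f)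
    (hsupp : HasCompactSupport f) (hfΩ : tsupport f ⊆ Ω) :
    ∫ x, f x ^ 2 / g x ^ 2 * ‖∇ g x‖ ^ 2 ∂μ ≤ 4 * ∫ x, ‖∇ f x‖ ^ 2 ∂μ := by
  have hpos' : ∀ x ∈ tsupport f, 0 < g x := fun x hx ↦ hpos x (hfΩ hx)
  obtain ⟨_, hφ⟩ := exists_lipschitzWith_sq_div_of_hasCompactSupport hf hsupp hg hpos'
  have hφf := tsupport_sq_div_subset f g
  have hφsupp : HasCompactSupport fun x ↦ f x ^ 2 / g x := hsupp.mono' (subset_closure.trans hφf)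
  have hφ0 : 0 ≤ fun x ↦ f x ^ 2 / g x := fun x ↦ by
    by_cases hx : x ∈ tsupport f
    · exact div_nonneg (sq_nonneg _) (hpos' x hx).le
    · simp [image_eq_zero_of_notMem_tsupport hx]
  have hfg := integrable_sq_div_mul_norm_gradient_sq (μ := μ) hf hsupp hg hpos'
  have hfint : Integrable (fun x ↦ ‖∇ f x‖ ^ 2) μ := by
    simpa only [real_inner_self_eq_norm_sq] using integrable_inner_gradient hf hf hsupp
  have key := calc
    0 ≤ ∫ x, ⟪∇ g x, ∇ (fun y ↦ f y ^ 2 / g y) x⟫ ∂μ :=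
        integral_inner_gradient_nonneg_of_concaveOn hΩ hconc hg hφ hφsupp hφ0 (hφf.trans hfΩ)
    _ ≤ ∫ x, 2 * ‖∇ f x‖ ^ 2 - f x ^ 2 / g x ^ 2 * ‖∇ g x‖ ^ 2 / 2 ∂μ := by
        refine integral_mono_ae (integrable_inner_gradient hg hφ hφsupp)
          ((hfint.const_mul 2).sub (hfg.div_const 2)) ?_
        filter_upwards [hf.ae_differentiableAt, hg.ae_differentiableAt] with x hfx hgx
        exact inner_gradient_sq_div_le hfx hgx fun hx ↦ (hpos' x hx).ne'
    _ = 2 * ∫ x, ‖∇ f x‖ ^ 2 ∂μ - (∫ x, f x ^ 2 / g x ^ 2 * ‖∇ g x‖ ^ 2 ∂μ) / 2 := by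
        rw [integral_sub (hfint.const_mul 2) (hfg.div_const 2), integral_const_mul,
          integral_div]
  linarith

theorem boundary_hardy_inequality_convex_general (hΩ : IsOpen Ω) (hne : Ω ≠ univ)
    (hconv : Convex ℝ Ω) (hf : LipschitzWith A f) (hsupp : HasCompactSupport f)
    (hfΩ : tsupport f ⊆ Ω) :
    ∫ x in Ω, f x ^ 2 / infDist x Ωᶜ ^ 2 ∂μ ≤ 4 * ∫ x in Ω, ‖∇ f x‖ ^ 2 ∂μ := by
  have hclosed : IsClosed Ωᶜ := hΩ.isClosed_compl
  have hne' : Ωᶜ.Nonempty := nonempty_compl.2 hne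
  have hpos : ∀ x ∈ Ω, 0 < infDist x Ωᶜ := fun x hx ↦
    (hclosed.notMem_iff_infDist_pos hne').1 (notMem_compl_iff.2 hx)
  have hδ : LipschitzWith 1 (infDist · Ωᶜ) := lipschitz_infDist_pt _
  have heik : (fun x ↦ f x ^ 2 / infDist x Ωᶜ ^ 2) =ᵐ[μ]
      fun x ↦ f x ^ 2 / infDist x Ωᶜ ^ 2 * ‖∇ (infDist · Ωᶜ) x‖ ^ 2 := by
    filter_upwards [hδ.ae_differentiableAt] with x hx
    by_cases hxΩ : x ∈ Ω
    · rw [norm_gradient_infDist hclosed hne' (notMem_compl_iff.2 hxΩ) hx, one_pow, mul_one]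
    · simp [image_eq_zero_of_notMem_tsupport fun h ↦ hxΩ (hfΩ h)]
  rw [setIntegral_eq_integral_of_forall_compl_eq_zero fun x hx ↦ by
      simp [image_eq_zero_of_notMem_tsupport fun h ↦ hx (hfΩ h)],
    setIntegral_eq_integral_of_forall_compl_eq_zero fun x hx ↦ by
      simp [gradient_of_notMem_tsupport fun h ↦ hx (hfΩ h)],
    integral_congr_ae heik]
  exact integral_sq_div_mul_norm_gradient_sq_le hΩ (concaveOn_infDist_compl hconv) hδ hpos hf
    hsupp hfΩ

end Integral

theorem boundary_hardy_inequality_convex {m : ℕ}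
    (Ω : Set (EuclideanSpace ℝ (Fin m))) (hΩopen : IsOpen Ω)
    (hΩne : Ω.Nonempty) (hΩproper : Ω ≠ Set.univ) (hΩconv : Convex ℝ Ω)
    (f : EuclideanSpace ℝ (Fin m) → ℝ)
    (hf : ContDiff ℝ (⊤ : ℕ∞) f) (hsupp : HasCompactSupport f) (h0 : tsupport f ⊆ Ω) :
    ∫ x in Ω, (f x) ^ 2 / (Metric.infDist x Ωᶜ) ^ 2
      ≤ 4 * ∫ x in Ω, ‖gradient f x‖ ^ 2 := by
  obtain ⟨C, hC⟩ := hf.lipschitzWith_of_hasCompactSupport hsupp (by simp)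
  exact boundary_hardy_inequality_convex_general hΩopen hΩproper hΩconv hC hsupp h0
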